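/- Let p ∈ F[X] be nonzero and q ∈ F{Y} with D(p) = q·p. Then for any two exponent vectors β, γ of monomials occurring in p (elements of the support of p, regarded as exponent vectors in the X-variables) and every 1 ≤ i ≤ n, Σ_{j=1}^n β_{ij} = Σ_{j=1}^n γ_{ij}. In particular, all monomials of p have the same total degree, i.e. p is a homogeneous polynomial in the X_{ij}. -/

import Mathlib

open MvPolynomial

/-- The polynomial ring `R = F{Y_ij}[X_ij]`: multivariate polynomials over `F` in the
variables `Y i j k` (indexed by `Sum.inl (i,j,k)`) and `X i j` (indexed by `Sum.inr (i,j)`). -/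
abbrev Rgen (F : Type*) [Field F] (n : ℕ) : Type _ :=
  MvPolynomial ((Fin n × Fin n × ℕ) ⊕ (Fin n × Fin n)) F

/-- `det[X]`: the determinant of the `n × n` matrix whose `(i,j)` entry is the variable `X i j`. -/
noncomputable def detX (F : Type*) [Field F] (n : ℕ) : Rgen F n :=
  (Matrix.of fun i j : Fin n => X (Sum.inr (i, j))).det

/-- The `F`-subalgebra `F{Y}` of `R` generated by all the variables `Y i j k`. -/
noncomputable def FY (F : Type*) [Field F] (n : ℕ) : Subalgebra F (Rgen F n) :=
  Algebra.adjoin F (Set.range fun v : Fin n × Fin n × ℕ => X (Sum.inl v))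

/-- The `F`-subalgebra `F[X]` of `R` generated by all the variables `X i j`. -/
noncomputable def FX (F : Type*) [Field F] (n : ℕ) : Subalgebra F (Rgen F n) :=
  Algebra.adjoin F (Set.range fun v : Fin n × Fin n => X (Sum.inr v))

/-!
Set the matrix `Y`, and all its derivatives, equal to a constant matrix `M`. For `p ∈ F[X]` the
value of `D p` at `M` differs from its value at `0` by the image of `p` under the derivation
`X ↦ M X`, in which the derivation of `F` no longer appears. For `M = diagonal a` this derivation
is the Euler operator giving every variable of the `i`-th row the weight `a i`, so `D p = q * p`
implies that the operator multiplies `p` by some polynomial. As the operator does not raise degrees,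
this polynomial is a constant, and in characteristic zero the eigenvectors of the operator are
weighted homogeneous. Weights supported on one row give the row sums, and the weight `1` gives
homogeneity.
-/

section WeightedEuler

variable {σ A : Type*}

/-- The Euler operator `∑ v, w v * X v * ∂/∂X v` of a weight `w`. Defining it by its values on the
variables allows infinitely many of them. -/
noncomputable def weightedEuler (A : Type*) [CommSemiring A] (w : σ → ℕ) :
    Derivation A (MvPolynomial σ A) (MvPolynomial σ A) :=
  mkDerivation A fun v => w v • X v

variable [CommSemiring A]

theorem weightedEuler_monomial (w : σ → ℕ) (β : σ →₀ ℕ) (a : A) :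
    weightedEuler A w (monomial β a) = Finsupp.weight w β • monomial β a := by
  have term_eq : ∀ v ∈ β.support, monomial (β - Finsupp.single v 1) (β v : A) • w v • X v =
      (β v • w v) • monomial β (1 : A) := fun v hv => by
    rw [X, smul_comm, smul_eq_mul, monomial_mul, mul_one,
      Finsupp.sub_add_single_one_cancel (Finsupp.mem_support_iff.mp hv), smul_monomial,
      smul_monomial]
    simp [mul_comm]
  calc
    weightedEuler A w (monomial β a)
    _ = a • ∑ v ∈ β.support, (β v • w v) • monomial β (1 : A) := by
      rw [weightedEuler, mkDerivation_monomial, Finsupp.sum, Finset.sum_congr rfl term_eq]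
    _ = Finsupp.weight w β • a • monomial β (1 : A) := by
      rw [← Finset.sum_smul, smul_comm, Finsupp.weight_apply, Finsupp.sum]
    _ = Finsupp.weight w β • monomial β a := by rw [smul_monomial, smul_eq_mul, mul_one]

theorem coeff_weightedEuler (w : σ → ℕ) (p : MvPolynomial σ A) (β : σ →₀ ℕ) :
    coeff β (weightedEuler A w p) = Finsupp.weight w β * coeff β p := by
  classical
  induction p using MvPolynomial.induction_on' with
  | monomial γ a =>
    rw [weightedEuler_monomial, coeff_smul, nsmul_eq_mul, coeff_monomial]
    split_ifs with h <;> simp [h]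
  | add p q hp hq => simp only [map_add, coeff_add, hp, hq, mul_add]

theorem totalDegree_weightedEuler_le (w : σ → ℕ) (p : MvPolynomial σ A) :
    (weightedEuler A w p).totalDegree ≤ p.totalDegree := by
  refine totalDegree_le_of_support_subset fun β hβ => ?_
  rw [mem_support_iff, coeff_weightedEuler] at hβ
  exact mem_support_iff.mpr (right_ne_zero_of_mul hβ)

theorem exists_eq_C_of_weightedEuler_eq_mul [NoZeroDivisors A] {w : σ → ℕ}
    {p r : MvPolynomial σ A} (hp : p ≠ 0) (h : weightedEuler A w p = r * p) :
    ∃ c, r = C c := by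
  rcases eq_or_ne r 0 with rfl | hr
  · exact ⟨0, C_0.symm⟩
  have hdeg : r.totalDegree + p.totalDegree ≤ p.totalDegree := by
    rw [← totalDegree_mul_of_isDomain hr hp, ← h]
    exact totalDegree_weightedEuler_le w p
  exact ⟨_, totalDegree_eq_zero_iff_eq_C.mp (by lia)⟩

theorem exists_isWeightedHomogeneous_of_weightedEuler_eq_mul [IsCancelMulZero A] [CharZero A]
    {w : σ → ℕ} {p r : MvPolynomial σ A} (h : weightedEuler A w p = r * p) :
    ∃ m, IsWeightedHomogeneous w p m := by
  rcases eq_or_ne p 0 with rfl | hp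
  · exact ⟨0, isWeightedHomogeneous_zero A w 0⟩
  obtain ⟨c, rfl⟩ := exists_eq_C_of_weightedEuler_eq_mul hp h
  have weight_eq : ∀ β, coeff β p ≠ 0 → (Finsupp.weight w β : A) = c := fun β hβ =>
    mul_right_cancel₀ hβ <| by rw [← coeff_weightedEuler, h, coeff_C_mul]
  obtain ⟨γ, hγ⟩ := ne_zero_iff.mp hp
  exact ⟨Finsupp.weight w γ, fun β hβ =>
    Nat.cast_injective ((weight_eq β hβ).trans (weight_eq γ hγ).symm)⟩

end WeightedEuler

section GenericMatrix

variable {A ι κ : Type*}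

section EvalAtMatrix

variable [CommSemiring A]

/-- The evaluation `Y = M` at a constant matrix. Each derivative `Y i j k` with `k ≥ 1` is sent to
`M i j` as well; any other value would do, since only the `Y i j 0` occur in the derivatives of the
variables `X i j`. -/
noncomputable def evalAtMatrix (κ : Type*) (M : Matrix ι ι A) :
    MvPolynomial ((ι × ι × ℕ) ⊕ (ι × κ)) A →ₐ[A] MvPolynomial (ι × κ) A :=
  aeval (Sum.elim (fun y => C (M y.1 y.2.1)) X)

theorem evalAtMatrix_rename_inr (M : Matrix ι ι A) (p : MvPolynomial (ι × κ) A) :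
    evalAtMatrix κ M (rename Sum.inr p) = p := by
  rw [evalAtMatrix, aeval_rename, Sum.elim_comp_inr, aeval_X_left_apply]

variable [Fintype ι]

/-- The derivation `X ↦ M X` of `A[X]`, where `X` is a matrix of variables. -/
noncomputable def matrixDerivation (κ : Type*) (M : Matrix ι ι A) :
    Derivation A (MvPolynomial (ι × κ) A) (MvPolynomial (ι × κ) A) :=
  mkDerivation A fun v => ∑ l, M v.1 l • X (l, v.2)

theorem matrixDerivation_diagonal [DecidableEq ι] (a : ι → ℕ) :
    matrixDerivation κ (Matrix.diagonal fun i => (a i : A)) =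
      weightedEuler A fun v => a v.1 := by
  refine derivation_ext fun v => ?_
  simp [matrixDerivation, weightedEuler, Matrix.diagonal_apply, ite_smul, Nat.cast_smul_eq_nsmul]

end EvalAtMatrix

section RowSums

variable [CommSemiring A]

theorem exists_rename_inr_eq {σ τ : Type*} {p : MvPolynomial (σ ⊕ τ) A}
    (hp : p ∈ supported A (Set.range Sum.inr)) : ∃ p', rename Sum.inr p' = p :=
  exists_rename_eq_of_vars_subset_range p Sum.inr Sum.inr_injective (mem_supported.mp hp)

theorem weight_single_comp_fst [DecidableEq ι] [Fintype κ] (i : ι) (β : ι × κ →₀ ℕ) :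
    Finsupp.weight (fun v : ι × κ => (Pi.single i 1 : ι → ℕ) v.1) β = ∑ j, β (i, j) := by
  classical
  induction β using Finsupp.induction_linear with
  | zero => simp
  | add β γ hβ hγ => simp only [map_add, hβ, hγ, Finsupp.add_apply, Finset.sum_add_distrib]
  | single v k =>
    by_cases hv : v.1 = i
    · simp [Finsupp.weight_single, Finsupp.single_apply, Prod.ext_iff, hv]
    · simp [Finsupp.weight_single, Prod.ext_iff, hv]

theorem sum_row_of_mem_support_rename_inr {σ : Type*} [DecidableEq ι] [Fintype κ] {i : ι}
    {p : MvPolynomial (ι × κ) A} {m : ℕ}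
    (hp : IsWeightedHomogeneous (fun v : ι × κ => (Pi.single i 1 : ι → ℕ) v.1) p m)
    {β : σ ⊕ (ι × κ) →₀ ℕ} (hβ : β ∈ (rename Sum.inr p).support) :
    ∑ j, β (Sum.inr (i, j)) = m := by
  classical
  rw [support_rename_of_injective Sum.inr_injective] at hβ
  obtain ⟨β', hβ', rfl⟩ := Finset.mem_image.mp hβ
  simp only [Finsupp.mapDomain_apply Sum.inr_injective]
  rw [← weight_single_comp_fst, hp (mem_support_iff.mp hβ')]

end RowSums

variable [CommRing A] [Fintype ι] {d : A → A}
  {D : Derivation ℤ (MvPolynomial ((ι × ι × ℕ) ⊕ (ι × κ)) A)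
    (MvPolynomial ((ι × ι × ℕ) ⊕ (ι × κ)) A)}

theorem evalAtMatrix_derivation_sub (hD_C : ∀ a, D (C a) = C (d a))
    (hD_X : ∀ i j, D (X (Sum.inr (i, j))) =
      ∑ l, X (Sum.inl (i, l, 0)) * X (Sum.inr (l, j)))
    (M : Matrix ι ι A) (p : MvPolynomial (ι × κ) A) :
    evalAtMatrix κ M (D (rename Sum.inr p)) - evalAtMatrix κ 0 (D (rename Sum.inr p)) =
      matrixDerivation κ M p := by
  induction p using MvPolynomial.induction_on with
  | C a => simp [hD_C, evalAtMatrix]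
  | add p q hp hq =>
    simp only [map_add]
    linear_combination hp + hq
  | mul_X p v hp =>
    have hX : evalAtMatrix κ M (D (X (Sum.inr v))) - evalAtMatrix κ 0 (D (X (Sum.inr v))) =
        matrixDerivation κ M (X v) := by
      simp [hD_X v.1 v.2, evalAtMatrix, matrixDerivation, smul_eq_C_mul]
    have heval : ∀ N : Matrix ι ι A, evalAtMatrix κ N (X (Sum.inr v)) = X v := fun N => by
      simp [evalAtMatrix]
    simp only [map_mul, rename_X, Derivation.leibniz, smul_eq_mul, map_add, heval,
      evalAtMatrix_rename_inr]
    linear_combination p * hX + X v * hp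

theorem exists_isWeightedHomogeneous_of_derivation_eq_mul [IsDomain A] [CharZero A]
    (hD_C : ∀ a, D (C a) = C (d a))
    (hD_X : ∀ i j, D (X (Sum.inr (i, j))) =
      ∑ l, X (Sum.inl (i, l, 0)) * X (Sum.inr (l, j)))
    {p : MvPolynomial (ι × κ) A} {q : MvPolynomial ((ι × ι × ℕ) ⊕ (ι × κ)) A}
    (hDp : D (rename Sum.inr p) = q * rename Sum.inr p) (a : ι → ℕ) :
    ∃ m, IsWeightedHomogeneous (fun v : ι × κ => a v.1) p m := by
  classical
  let M : Matrix ι ι A := Matrix.diagonal fun i => (a i : A)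
  have hE : weightedEuler A (fun v : ι × κ => a v.1) p =
      (evalAtMatrix κ M q - evalAtMatrix κ 0 q) * p := by
    rw [← matrixDerivation_diagonal, ← evalAtMatrix_derivation_sub hD_C hD_X, hDp]
    simp only [map_mul, evalAtMatrix_rename_inr, sub_mul, M]
  exact exists_isWeightedHomogeneous_of_weightedEuler_eq_mul hE

theorem stmt_9_general [IsDomain A] [CharZero A] [Fintype κ]
    (hD_C : ∀ a, D (C a) = C (d a))
    (hD_X : ∀ i j, D (X (Sum.inr (i, j))) =
      ∑ l, X (Sum.inl (i, l, 0)) * X (Sum.inr (l, j)))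
    {p q : MvPolynomial ((ι × ι × ℕ) ⊕ (ι × κ)) A}
    (hp : p ∈ supported A (Set.range Sum.inr)) (hDp : D p = q * p) :
    (∀ β ∈ p.support, ∀ γ ∈ p.support, ∀ i,
      ∑ j, β (Sum.inr (i, j)) = ∑ j, γ (Sum.inr (i, j))) ∧
    ∃ N, p.IsHomogeneous N := by
  classical
  obtain ⟨p, rfl⟩ := exists_rename_inr_eq hp
  have homogeneous := exists_isWeightedHomogeneous_of_derivation_eq_mul hD_C hD_X hDp
  constructor
  · intro β hβ γ hγ i
    obtain ⟨m, hm⟩ := homogeneous (Pi.single i 1)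
    rw [sum_row_of_mem_support_rename_inr hm hβ, sum_row_of_mem_support_rename_inr hm hγ]
  · obtain ⟨N, hN⟩ := homogeneous 1
    exact ⟨N, IsHomogeneous.rename_isHomogeneous hN⟩

end GenericMatrix

/-- An additive map satisfying the Leibniz rule, bundled as a derivation over `ℤ`. -/
def derivationOfLeibniz {R : Type*} [CommRing R] (D : R → R)
    (hD_add : ∀ a b, D (a + b) = D a + D b)
    (hD_mul : ∀ a b, D (a * b) = D a * b + a * D b) : Derivation ℤ R R :=
  .mk' (AddMonoidHom.mk' D hD_add).toIntLinearMap fun a b => by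
    simpa [mul_comm, add_comm] using hD_mul a b

theorem FX_eq_supported (F : Type*) [Field F] (n : ℕ) :
    FX F n = supported F (Set.range Sum.inr) := by
  rw [FX, supported, ← Set.range_comp]
  rfl

/-- If `p ∈ F[X]` is nonzero, `q ∈ F{Y}` and `D p = q * p`, then all
monomials of `p` have the same row sums `∑_j β_{ij}` for each `i`; in particular `p`
is homogeneous. -/
theorem stmt_9
    {F : Type*} [Field F] [CharZero F] (d : F → F)
    (hd_add : ∀ a b : F, d (a + b) = d a + d b)
    (hd_mul : ∀ a b : F, d (a * b) = d a * b + a * d b)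
    (n : ℕ) (hn : 1 ≤ n)
    (D : Rgen F n → Rgen F n)
    (hD_add : ∀ a b, D (a + b) = D a + D b)
    (hD_mul : ∀ a b, D (a * b) = D a * b + a * D b)
    (hD_C : ∀ f : F, D (C f) = C (d f))
    (hD_Y : ∀ (i j : Fin n) (k : ℕ),
      D (X (Sum.inl (i, j, k))) = X (Sum.inl (i, j, k + 1)))
    (hD_X : ∀ i j : Fin n,
      D (X (Sum.inr (i, j))) = ∑ l : Fin n, X (Sum.inl (i, l, 0)) * X (Sum.inr (l, j)))
    (p q : Rgen F n) (hp : p ∈ FX F n) (hp0 : p ≠ 0) (hq : q ∈ FY F n)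
    (hDp : D p = q * p) :
    (∀ β ∈ p.support, ∀ γ ∈ p.support, ∀ i : Fin n,
      ∑ j : Fin n, β (Sum.inr (i, j)) = ∑ j : Fin n, γ (Sum.inr (i, j))) ∧
    ∃ N : ℕ, p.IsHomogeneous N :=
  stmt_9_general (D := derivationOfLeibniz D hD_add hD_mul) hD_C hD_X
    (FX_eq_supported F n ▸ hp) hDp
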